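/- For every bounded continuous function u : [0,∞) → ℝ, every s ∈ [0,1], and every constant c > 0, letting p_t(r) = c · e^{−t/8} · t^{−3/2} · sinh(r) · ∫_r^∞ σ·e^{−σ²/(2t)}·(cosh(σ) − cosh(r))^{−1/2} dσ, one has lim_{t→∞} ( ∫_0^∞ p_t(r)·u(r) dr − ∫_0^∞ p_t(r+s)·u(r) dr ) = 0. -/

import Mathlib

open MeasureTheory Filter Real

/-- The density of the radial part of hyperbolic Brownian motion at time `t`
(with a multiplicative constant `c`). -/
noncomputable def pdens (c t r : ℝ) : ℝ :=
  c * Real.exp (-t / 8) * t ^ (-(3 : ℝ) / 2) * Real.sinh r *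
    ∫ σ in Set.Ioi r,
      σ * Real.exp (-σ ^ 2 / (2 * t)) * (Real.cosh σ - Real.cosh r) ^ (-(1 : ℝ) / 2)

open Set Topology

/-! The density is a mixture of kernels, `p_t(r) = ∫ w_t(σ) k(σ, r) dσ` with
`k(σ, r) = sinh r / √(cosh σ - cosh r)`, and translating `r` by `s` amounts to translating both
`r` and `σ` in the mixture. The inequality `e^(s/2) k(σ, r) ≤ k(σ + s, r + s)` removes the absolute
value from the `L¹` distance of its two sides, which becomes a difference of explicit integrals
and is at most `√2 e^(s/2)` although each side has mass of order `e^(σ/2)`. By Tonelli, the `L¹`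
distance of `p_t` and its translate is therefore controlled by that of `g_t(σ) = w_t(σ) e^(σ/2)`
and its translate, up to a multiple of `∫ w_t → 0`. The function `g_t` is a nearly Gaussian bump of
mean `t / 2` and width `√t`: after rescaling, the translation is by `s / √t`, and translations are
continuous in `L¹`. -/

section Translation

lemma setIntegral_Ioi_comp_add_right (f : ℝ → ℝ) (a s : ℝ) :
    ∫ x in Ioi a, f (x + s) = ∫ x in Ioi (a + s), f x := by
  simpa using (measurePreserving_add_right volume s).setIntegral_preimage_emb
    (measurableEmbedding_addRight s) f (Ioi (a + s))

lemma integrableOn_preimage_comp_add_right_iff {G E : Type*} [AddGroup G] [MeasurableSpace G]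
    [MeasurableAdd G] [NormedAddCommGroup E] {μ : Measure G} [μ.IsAddRightInvariant]
    {f : G → E} {S : Set G} (g : G) :
    IntegrableOn (fun x => f (x + g)) ((· + g) ⁻¹' S) μ ↔ IntegrableOn f S μ :=
  (measurePreserving_add_right μ g).integrableOn_comp_preimage (measurableEmbedding_addRight g)

lemma integrableOn_Ioi_zero_comp_add_right {f : ℝ → ℝ} {s : ℝ} (hf : IntegrableOn f (Ioi 0))
    (hs : 0 ≤ s) : IntegrableOn (fun x => f (x + s)) (Ioi 0) := by
  have := (integrableOn_preimage_comp_add_right_iff s).2 (hf.mono_set (Ioi_subset_Ioi hs))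
  simpa using this

lemma integrable_norm_sub_comp_add_right {G E : Type*} [AddGroup G] [MeasurableSpace G]
    [MeasurableAdd G] [NormedAddCommGroup E] {μ : Measure G} [μ.IsAddRightInvariant] {f : G → E}
    (hf : Integrable f μ) (a : G) : Integrable (fun x => ‖f x - f (x + a)‖) μ :=
  (hf.sub (hf.comp_add_right a)).norm

lemma tendsto_integral_norm_sub_comp_add_right {G E : Type*} [AddGroup G] [TopologicalSpace G]
    [IsTopologicalAddGroup G] [MeasurableSpace G] [BorelSpace G] [NormedAddCommGroup E]
    {μ : Measure G} [μ.IsAddRightInvariant] [μ.InnerRegularCompactLTTop]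
    [IsLocallyFiniteMeasure μ] {f : G → E} (hf : Integrable f μ) :
    Tendsto (fun a => ∫ x, ‖f x - f (x + a)‖ ∂μ) (𝓝 0) (𝓝 0) := by
  have hcont : Continuous fun a : G =>
      Lp.compMeasurePreserving (· + a) (measurePreserving_add_right μ a) (hf.toL1 f) :=
    (continuous_const (y := hf.toL1 f)).compMeasurePreservingLp
      (g := fun a => ContinuousMap.mk (· + a))
      (ContinuousMap.continuous_of_continuous_uncurry _ (continuous_snd.add continuous_fst))
      (fun a => measurePreserving_add_right μ a) ENNReal.one_ne_top
  have hnorm (a : G) : ∫ x, ‖f x - f (x + a)‖ ∂μ = ‖hf.toL1 f -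
      Lp.compMeasurePreserving (· + a) (measurePreserving_add_right μ a) (hf.toL1 f)‖ := by
    have hmp := measurePreserving_add_right μ a
    rw [L1.norm_eq_integral_norm]
    refine integral_congr_ae ?_
    filter_upwards [Lp.coeFn_sub (hf.toL1 f) (Lp.compMeasurePreserving _ hmp (hf.toL1 f)),
      Lp.coeFn_compMeasurePreserving (hf.toL1 f) hmp, hf.coeFn_toL1,
      hmp.quasiMeasurePreserving.ae hf.coeFn_toL1] with x hsub hcomp hx hxa
    rw [hsub, Pi.sub_apply, hcomp, Function.comp_apply, hx, hxa]
  have hcont_norm : Continuous fun a => ∫ x, ‖f x - f (x + a)‖ ∂μ := by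
    simp_rw [hnorm]
    exact (continuous_const.sub hcont).norm
  simpa using hcont_norm.tendsto 0

lemma integral_norm_sub_comp_div {E : Type*} [NormedAddCommGroup E] (f : ℝ → E) {L : ℝ}
    (hL : 0 < L) (m s : ℝ) :
    ∫ x, ‖f ((x - m) / L) - f ((x + s - m) / L)‖ = L * ∫ z, ‖f z - f (z + s / L)‖ := by
  have hshift (x : ℝ) : (x + s - m) / L = (x - m) / L + s / L := by ring
  simp_rw [hshift]
  rw [integral_sub_right_eq_self (fun x => ‖f (x / L) - f (x / L + s / L)‖) m,
    Measure.integral_comp_div (fun z => ‖f z - f (z + s / L)‖) L, abs_of_pos hL, smul_eq_mul]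

end Translation

lemma integral_norm_integral_le {X Y E : Type*} [MeasurableSpace X] [MeasurableSpace Y]
    [NormedAddCommGroup E] [NormedSpace ℝ E] {μ : Measure X} {ν : Measure Y} [SFinite μ]
    [SFinite ν] {F : X × Y → E} (hF : Integrable F (μ.prod ν)) :
    ∫ y, ‖∫ x, F (x, y) ∂μ‖ ∂ν ≤ ∫ x, ∫ y, ‖F (x, y)‖ ∂ν ∂μ :=
  calc ∫ y, ‖∫ x, F (x, y) ∂μ‖ ∂ν ≤ ∫ y, ∫ x, ‖F (x, y)‖ ∂μ ∂ν :=
        integral_mono hF.integral_prod_right.norm hF.norm.integral_prod_right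
          fun _ => norm_integral_le_integral_norm _
    _ = ∫ x, ∫ y, ‖F (x, y)‖ ∂ν ∂μ := (integral_integral_swap hF.norm).symm

section Hyperbolic

lemma sqrt_cosh_sub_one {x : ℝ} (hx : 0 ≤ x) : √(cosh x - 1) = √2 * sinh (x / 2) := by
  have h : cosh x - 1 = 2 * sinh (x / 2) ^ 2 := by
    have := cosh_two_mul (x / 2)
    rw [mul_div_cancel₀ x two_ne_zero, cosh_sq] at this
    linarith
  rw [h, sqrt_mul zero_le_two, sqrt_sq (sinh_nonneg_iff.2 (by positivity))]

lemma exp_mul_sinh_le_sinh_add {s : ℝ} (hs : 0 ≤ s) (r : ℝ) :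
    exp s * sinh r ≤ sinh (r + s) := by
  have h : exp (-(r + s)) ≤ exp (s - r) := exp_le_exp.2 (by linarith)
  rw [sinh_eq, sinh_eq, ← mul_div_assoc, mul_sub, ← exp_add, ← exp_add, add_comm s r,
    ← sub_eq_add_neg]
  linarith

lemma sinh_mul_cosh_add_sub_cosh_add_le {s : ℝ} (hs : 0 ≤ s) (σ r : ℝ) :
    sinh r * (cosh (σ + s) - cosh (r + s)) ≤ sinh (r + s) * (cosh σ - cosh r) := by
  have h : sinh (r + s) * (cosh σ - cosh r) - sinh r * (cosh (σ + s) - cosh (r + s)) =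
      sinh s * (cosh (σ - r) - 1) := by
    rw [sinh_add, cosh_add, cosh_add, cosh_sub]
    linear_combination (-sinh s) * cosh_sq r
  have : 0 ≤ sinh s * (cosh (σ - r) - 1) :=
    mul_nonneg (sinh_nonneg_iff.2 hs) (sub_nonneg.2 (one_le_cosh _))
  linarith

end Hyperbolic

/-- The singular kernel `sinh r / √(cosh σ - cosh r)` on `0 ≤ r < σ`, through which the radial
density is a mixture over `σ`. For `0 ≤ σ ≤ r` the radicand is nonpositive, so the conventions
`√x = 0` for `x ≤ 0` and `y / 0 = 0` make the kernel vanish there. -/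
noncomputable def radialKernel (σ r : ℝ) : ℝ := sinh r / √(cosh σ - cosh r)

namespace radialKernel

variable {s σ r : ℝ}

lemma nonneg (σ : ℝ) (hr : 0 ≤ r) : 0 ≤ radialKernel σ r :=
  div_nonneg (sinh_nonneg_iff.2 hr) (sqrt_nonneg _)

lemma eq_zero_of_le (hσ : 0 ≤ σ) (h : σ ≤ r) : radialKernel σ r = 0 := by
  have : cosh σ - cosh r ≤ 0 := sub_nonpos.2 <| cosh_le_cosh.2 <| by
    rwa [abs_of_nonneg hσ, abs_of_nonneg (hσ.trans h)]
  rw [radialKernel, sqrt_eq_zero_of_nonpos this, div_zero]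

lemma cosh_sub_cosh_pos (hr : 0 ≤ r) (h : r < σ) : 0 < cosh σ - cosh r := by
  rwa [sub_pos, cosh_lt_cosh, abs_of_nonneg hr, abs_of_nonneg (hr.trans h.le)]

lemma sq_eq (hr : 0 ≤ r) (h : r < σ) :
    radialKernel σ r ^ 2 = sinh r ^ 2 / (cosh σ - cosh r) := by
  rw [radialKernel, div_pow, sq_sqrt (cosh_sub_cosh_pos hr h).le]

lemma exp_half_mul_le (hs : 0 ≤ s) (hσ : 0 ≤ σ) (hr : 0 ≤ r) :
    exp (s / 2) * radialKernel σ r ≤ radialKernel (σ + s) (r + s) := by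
  have hrs : 0 ≤ r + s := add_nonneg hr hs
  rcases le_or_gt σ r with h | h
  · rw [eq_zero_of_le hσ h, mul_zero]
    exact nonneg _ hrs
  have hD := cosh_sub_cosh_pos hr h
  have hDs := cosh_sub_cosh_pos hrs (add_lt_add_left h s)
  have hsinh := sinh_nonneg_iff.2 hr
  have hsinhs := sinh_nonneg_iff.2 hrs
  refine (sq_le_sq₀ (mul_nonneg (exp_pos _).le (nonneg _ hr)) (nonneg _ hrs)).1 ?_
  rw [mul_pow, ← exp_nat_mul, Nat.cast_ofNat, mul_div_cancel₀ s two_ne_zero, sq_eq hr h,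
    sq_eq hrs (add_lt_add_left h s), ← mul_div_assoc, div_le_div_iff₀ hD hDs]
  calc exp s * sinh r ^ 2 * (cosh (σ + s) - cosh (r + s))
      = (exp s * sinh r) * (sinh r * (cosh (σ + s) - cosh (r + s))) := by ring
    _ ≤ sinh (r + s) * (sinh (r + s) * (cosh σ - cosh r)) :=
      mul_le_mul (exp_mul_sinh_le_sinh_add hs r) (sinh_mul_cosh_add_sub_cosh_add_le hs σ r)
        (mul_nonneg hsinh hDs.le) hsinhs
    _ = sinh (r + s) ^ 2 * (cosh σ - cosh r) := by ring

lemma hasDerivAt_neg_two_mul_sqrt (hr : 0 ≤ r) (h : r < σ) :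
    HasDerivAt (fun x => -2 * √(cosh σ - cosh x)) (radialKernel σ r) r := by
  have := (((hasDerivAt_cosh r).const_sub (cosh σ)).sqrt
    (cosh_sub_cosh_pos hr h).ne').const_mul (-2)
  refine this.congr_deriv ?_
  rw [radialKernel]
  ring

lemma integrableOn_Ioi (hσ : 0 ≤ σ) : IntegrableOn (radialKernel σ) (Ioi 0) := by
  have hIoc : IntegrableOn (radialKernel σ) (Ioc 0 σ) :=
    intervalIntegral.integrableOn_deriv_of_nonneg (by fun_prop)
      (fun r hr => hasDerivAt_neg_two_mul_sqrt hr.1.le hr.2) (fun r hr => nonneg σ hr.1.le)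
  refine hIoc.of_forall_sdiff_eq_zero measurableSet_Ioi fun r hr => eq_zero_of_le hσ ?_
  exact le_of_not_ge fun h => hr.2 ⟨hr.1, h⟩

lemma integral_Ioi {a : ℝ} (ha : 0 ≤ a) (h : a ≤ σ) :
    ∫ r in Ioi a, radialKernel σ r = 2 * √(cosh σ - cosh a) := by
  have hint : IntegrableOn (radialKernel σ) (Ioc a σ) :=
    (integrableOn_Ioi (ha.trans h)).mono_set fun r hr => ha.trans_lt hr.1
  rw [setIntegral_eq_of_subset_of_forall_sdiff_eq_zero measurableSet_Ioi Ioc_subset_Ioi_self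
      fun r hr => eq_zero_of_le (ha.trans h) (le_of_not_ge fun h => hr.2 ⟨hr.1, h⟩),
    ← intervalIntegral.integral_of_le h,
    intervalIntegral.integral_eq_sub_of_hasDerivAt_of_le h (by fun_prop)
      (fun r hr => hasDerivAt_neg_two_mul_sqrt (ha.trans hr.1.le) hr.2)
      ((intervalIntegrable_iff_integrableOn_Ioc_of_le h).2 hint)]
  simp

lemma integral_Ioi_zero (hσ : 0 ≤ σ) :
    ∫ r in Ioi 0, radialKernel σ r = 2 * (√2 * sinh (σ / 2)) := by
  rw [integral_Ioi le_rfl hσ, cosh_zero, sqrt_cosh_sub_one hσ]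

lemma integral_Ioi_zero_le (hσ : 0 ≤ σ) :
    ∫ r in Ioi 0, radialKernel σ r ≤ √2 * exp (σ / 2) := by
  have : 0 ≤ √2 * exp (-(σ / 2)) := by positivity
  rw [integral_Ioi_zero hσ, sinh_eq]
  linarith

lemma integrableOn_Ioi_add (hs : 0 ≤ s) (hσ : 0 ≤ σ) :
    IntegrableOn (fun r => radialKernel (σ + s) (r + s)) (Ioi 0) :=
  integrableOn_Ioi_zero_comp_add_right (integrableOn_Ioi (add_nonneg hσ hs)) hs

lemma integral_add_sub_le (hs : 0 ≤ s) (hσ : 0 ≤ σ) :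
    ∫ r in Ioi 0, (radialKernel (σ + s) (r + s) - exp (s / 2) * radialKernel σ r) ≤
      √2 * exp (s / 2) := by
  have hshift : ∫ r in Ioi 0, radialKernel (σ + s) (r + s) ≤ 2 * (√2 * sinh ((σ + s) / 2)) := by
    rw [setIntegral_Ioi_comp_add_right, zero_add, integral_Ioi hs (le_add_of_nonneg_left hσ),
      ← sqrt_cosh_sub_one (add_nonneg hσ hs)]
    gcongr
    exact one_le_cosh s
  have hsinh : 2 * sinh ((σ + s) / 2) - exp (s / 2) * (2 * sinh (σ / 2)) ≤ exp (s / 2) := by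
    have hadd : exp ((σ + s) / 2) = exp (s / 2) * exp (σ / 2) := by rw [← exp_add]; ring_nf
    have hle : exp (s / 2) * exp (-(σ / 2)) ≤ exp (s / 2) :=
      mul_le_of_le_one_right (exp_pos _).le (exp_le_one_iff.2 (by linarith))
    rw [sinh_eq, sinh_eq, hadd]
    linarith [exp_pos (-((σ + s) / 2))]
  rw [integral_sub (integrableOn_Ioi_add hs hσ) ((integrableOn_Ioi hσ).const_mul _),
    integral_const_mul, integral_Ioi_zero hσ]
  linarith [mul_le_mul_of_nonneg_left hsinh (sqrt_nonneg 2)]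

lemma integral_abs_mul_sub_mul_add_le (hs : 0 ≤ s) (hσ : 0 ≤ σ) (a b : ℝ) :
    ∫ r in Ioi 0, |a * radialKernel σ r - b * radialKernel (σ + s) (r + s)| ≤
      √2 * |a * exp (σ / 2) - b * exp ((σ + s) / 2)| + √2 * exp (s / 2) * |b| := by
  have hk := integrableOn_Ioi hσ
  have hks := integrableOn_Ioi_add hs hσ
  have hdiff : IntegrableOn
      (fun r => radialKernel (σ + s) (r + s) - exp (s / 2) * radialKernel σ r) (Ioi 0) :=
    hks.sub (hk.const_mul _)
  have hexp : |a * exp (σ / 2) - b * exp ((σ + s) / 2)| = |a - b * exp (s / 2)| * exp (σ / 2) := by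
    rw [← abs_of_pos (exp_pos (σ / 2)), ← abs_mul, abs_of_pos (exp_pos (σ / 2)), sub_mul,
      mul_assoc b, ← exp_add]
    ring_nf
  calc ∫ r in Ioi 0, |a * radialKernel σ r - b * radialKernel (σ + s) (r + s)|
      ≤ ∫ r in Ioi 0, (|a - b * exp (s / 2)| * radialKernel σ r +
          |b| * (radialKernel (σ + s) (r + s) - exp (s / 2) * radialKernel σ r)) := by
        refine setIntegral_mono_on ((hk.const_mul a).sub (hks.const_mul b)).abs
          ((hk.const_mul _).add (hdiff.const_mul _)) measurableSet_Ioi fun r hr => ?_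
        rw [mem_Ioi] at hr
        calc |a * radialKernel σ r - b * radialKernel (σ + s) (r + s)|
            = |(a - b * exp (s / 2)) * radialKernel σ r -
                b * (radialKernel (σ + s) (r + s) - exp (s / 2) * radialKernel σ r)| := by
              ring_nf
          _ ≤ _ := abs_sub _ _
          _ = _ := by
              rw [abs_mul, abs_mul, abs_of_nonneg (nonneg σ hr.le),
                abs_of_nonneg (sub_nonneg.2 (exp_half_mul_le hs hσ hr.le))]
    _ = |a - b * exp (s / 2)| * (∫ r in Ioi 0, radialKernel σ r) + |b| *
          ∫ r in Ioi 0, (radialKernel (σ + s) (r + s) - exp (s / 2) * radialKernel σ r) := by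
        rw [integral_add (hk.const_mul _) (hdiff.const_mul _), integral_const_mul,
          integral_const_mul]
    _ ≤ |a - b * exp (s / 2)| * (√2 * exp (σ / 2)) + |b| * (√2 * exp (s / 2)) := by
        gcongr
        · exact integral_Ioi_zero_le hσ
        · exact integral_add_sub_le hs hσ
    _ = √2 * |a * exp (σ / 2) - b * exp ((σ + s) / 2)| + √2 * exp (s / 2) * |b| := by
        rw [hexp]
        ring

end radialKernel

/-- The density in `z` of the tilted weight `radialWeight t σ * exp (σ / 2)` in the variable
`z = (σ - t / 2) / √t`, with `ε = 1 / √t`; at `ε = 0` it is a multiple of the Gaussian. -/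
noncomputable def gaussianProfile (ε z : ℝ) : ℝ := (1 / 2 + ε * z) * exp (-(1 / 2) * z ^ 2)

namespace gaussianProfile

lemma integrable_gaussian : Integrable fun z : ℝ => exp (-(1 / 2) * z ^ 2) :=
  integrable_exp_neg_mul_sq one_half_pos

lemma integrable_mul_gaussian : Integrable fun z : ℝ => z * exp (-(1 / 2) * z ^ 2) :=
  integrable_mul_exp_neg_mul_sq one_half_pos

lemma eq_add (ε z : ℝ) : gaussianProfile ε z =
    1 / 2 * exp (-(1 / 2) * z ^ 2) + ε * (z * exp (-(1 / 2) * z ^ 2)) := by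
  rw [gaussianProfile]
  ring

protected lemma integrable (ε : ℝ) : Integrable (gaussianProfile ε) :=
  ((integrable_gaussian.const_mul (1 / 2)).add (integrable_mul_gaussian.const_mul ε)).congr <|
    .of_forall fun z => (eq_add ε z).symm

lemma tendsto_integral_abs_sub :
    Tendsto (fun p : ℝ × ℝ => ∫ z, |gaussianProfile p.1 z - gaussianProfile p.1 (z + p.2)|)
      (𝓝 0) (𝓝 0) := by
  set γ : ℝ → ℝ := fun z => exp (-(1 / 2) * z ^ 2)
  set η : ℝ → ℝ := fun z => z * γ z
  have hγ : Integrable γ := integrable_gaussian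
  have hη : Integrable η := integrable_mul_gaussian
  have heq (ε z : ℝ) : gaussianProfile ε z = 1 / 2 * γ z + ε * η z := eq_add ε z
  have hbound (p : ℝ × ℝ) : ∫ z, |gaussianProfile p.1 z - gaussianProfile p.1 (z + p.2)| ≤
      1 / 2 * (∫ z, ‖γ z - γ (z + p.2)‖) + |p.1| * ∫ z, ‖η z - η (z + p.2)‖ := by
    have iγ := (integrable_norm_sub_comp_add_right hγ p.2).const_mul (1 / 2)
    have iη := (integrable_norm_sub_comp_add_right hη p.2).const_mul |p.1|
    rw [← integral_const_mul, ← integral_const_mul, ← integral_add iγ iη]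
    refine integral_mono (integrable_norm_sub_comp_add_right (gaussianProfile.integrable p.1) p.2)
      (iγ.add iη) fun z => ?_
    calc |gaussianProfile p.1 z - gaussianProfile p.1 (z + p.2)|
        = |1 / 2 * (γ z - γ (z + p.2)) + p.1 * (η z - η (z + p.2))| := by
          rw [heq, heq]
          ring_nf
      _ ≤ |1 / 2 * (γ z - γ (z + p.2))| + |p.1 * (η z - η (z + p.2))| := abs_add_le _ _
      _ = 1 / 2 * ‖γ z - γ (z + p.2)‖ + |p.1| * ‖η z - η (z + p.2)‖ := by
          rw [abs_mul, abs_mul, abs_of_pos one_half_pos, norm_eq_abs, norm_eq_abs]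
  have hfst : Tendsto (fun p : ℝ × ℝ => |p.1|) (𝓝 0) (𝓝 0) :=
    continuous_fst.abs.tendsto' 0 0 abs_zero
  have hsnd : Tendsto (fun p : ℝ × ℝ => p.2) (𝓝 0) (𝓝 0) := continuous_snd.tendsto 0
  have hlim := (((tendsto_integral_norm_sub_comp_add_right hγ).comp hsnd).const_mul (1 / 2)).add
    (hfst.mul ((tendsto_integral_norm_sub_comp_add_right hη).comp hsnd))
  simp only [mul_zero, add_zero] at hlim
  exact squeeze_zero (fun p => integral_nonneg fun _ => abs_nonneg _) hbound hlim

end gaussianProfile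

/-- The factor of the integrand of `pdens 1 t` that depends on `σ` and `t` but not on `r`. -/
noncomputable def radialWeight (t σ : ℝ) : ℝ :=
  exp (-t / 8) * t ^ (-(3 : ℝ) / 2) * (σ * exp (-σ ^ 2 / (2 * t)))

namespace radialWeight

variable {s t σ : ℝ}

lemma nonneg (ht : 0 ≤ t) (hσ : 0 ≤ σ) : 0 ≤ radialWeight t σ := by
  unfold radialWeight
  positivity

protected lemma eq_mul_exp_neg_mul_sq (t σ : ℝ) : radialWeight t σ =
    exp (-t / 8) * t ^ (-(3 : ℝ) / 2) * (σ * exp (-(1 / (2 * t)) * σ ^ 2)) := by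
  rw [radialWeight]
  ring_nf

protected lemma integrable (ht : 0 < t) : Integrable (radialWeight t) := by
  simp_rw [funext (radialWeight.eq_mul_exp_neg_mul_sq t)]
  exact (integrable_mul_exp_neg_mul_sq (by positivity)).const_mul _

lemma integral_Ioi_zero (ht : 0 < t) :
    ∫ σ in Ioi 0, radialWeight t σ = exp (-t / 8) * t ^ (-(1 / 2) : ℝ) := by
  have hgamma : ∫ σ in Ioi 0, σ * exp (-(1 / (2 * t)) * σ ^ 2) = t := by
    have hmoment := integral_rpow_mul_exp_neg_mul_rpow (p := 2) (q := 1) (b := 1 / (2 * t)) two_pos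
      (by norm_num) (by positivity)
    have hvalue : (1 / (2 * t)) ^ (-(1 + 1) / 2 : ℝ) * (1 / 2) * Gamma ((1 + 1) / 2) = t := by
      norm_num [rpow_neg_one]
      ring
    simpa only [rpow_one, rpow_two, hvalue] using hmoment
  simp_rw [radialWeight.eq_mul_exp_neg_mul_sq]
  rw [integral_const_mul, hgamma, mul_assoc, ← rpow_add_one ht.ne']
  norm_num

lemma integral_Ioi_add_le (ht : 0 < t) (hs : 0 ≤ s) :
    ∫ σ in Ioi 0, radialWeight t (σ + s) ≤ exp (-t / 8) * t ^ (-(1 / 2) : ℝ) := by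
  rw [setIntegral_Ioi_comp_add_right, zero_add, ← integral_Ioi_zero ht]
  refine setIntegral_mono_set (radialWeight.integrable ht).integrableOn ?_
    (Ioi_subset_Ioi hs).eventuallyLE
  filter_upwards [ae_restrict_mem measurableSet_Ioi] with σ hσ
  exact nonneg ht.le (le_of_lt hσ)

lemma mul_exp_half (ht : 0 < t) (σ : ℝ) : radialWeight t σ * exp (σ / 2) =
    (√t)⁻¹ * gaussianProfile (√t)⁻¹ ((σ - t / 2) / √t) := by
  have hpow : t ^ (-(3 : ℝ) / 2) = (√t ^ 3)⁻¹ := by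
    rw [sqrt_eq_rpow, ← rpow_mul_natCast ht.le, ← rpow_neg ht.le]
    norm_num
  have hsq : √t ^ 2 = t := sq_sqrt ht.le
  have hexp : exp (-t / 8) * exp (-σ ^ 2 / (2 * t)) * exp (σ / 2) =
      exp (-(1 / 2) * ((σ - t / 2) / √t) ^ 2) := by
    rw [← exp_add, ← exp_add, div_pow, hsq]
    congr 1
    field_simp
    ring
  have hcoeff : (√t)⁻¹ * (1 / 2 + (√t)⁻¹ * ((σ - t / 2) / √t)) = (√t ^ 3)⁻¹ * σ := by
    field_simp
    rw [hsq]
    ring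
  rw [gaussianProfile, ← mul_assoc, hcoeff, ← hexp, radialWeight, hpow]
  ring

lemma integrable_mul_exp_half (ht : 0 < t) :
    Integrable fun σ => radialWeight t σ * exp (σ / 2) := by
  simp_rw [mul_exp_half ht]
  exact (((gaussianProfile.integrable _).comp_div (sqrt_pos.2 ht).ne').comp_sub_right _).const_mul _

lemma integral_abs_mul_exp_half_sub (ht : 0 < t) (s : ℝ) :
    ∫ σ, |radialWeight t σ * exp (σ / 2) - radialWeight t (σ + s) * exp ((σ + s) / 2)| =
      ∫ z, |gaussianProfile (√t)⁻¹ z - gaussianProfile (√t)⁻¹ (z + s / √t)| := by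
  have hL : 0 < √t := sqrt_pos.2 ht
  simp_rw [mul_exp_half ht, ← mul_sub, abs_mul, abs_of_pos (inv_pos.2 hL)]
  rw [integral_const_mul]
  simp_rw [← norm_eq_abs]
  rw [integral_norm_sub_comp_div _ hL, inv_mul_cancel_left₀ hL.ne']

lemma tendsto_integral_abs_mul_exp_half_sub (s : ℝ) :
    Tendsto (fun t => ∫ σ, |radialWeight t σ * exp (σ / 2) -
      radialWeight t (σ + s) * exp ((σ + s) / 2)|) atTop (𝓝 0) := by
  have hscale : Tendsto (fun t : ℝ => ((√t)⁻¹, s / √t)) atTop (𝓝 0) :=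
    (tendsto_inv_atTop_zero.comp tendsto_sqrt_atTop).prodMk_nhds
      (tendsto_const_nhds.div_atTop tendsto_sqrt_atTop)
  refine (gaussianProfile.tendsto_integral_abs_sub.comp hscale).congr' ?_
  filter_upwards [eventually_gt_atTop 0] with t ht
  exact (integral_abs_mul_exp_half_sub ht s).symm

end radialWeight

/-- The joint density whose marginal in `r` is `pdens 1 t r`. -/
noncomputable def radialJoint (t : ℝ) (p : ℝ × ℝ) : ℝ := radialWeight t p.1 * radialKernel p.1 p.2

namespace radialJoint

variable {s t : ℝ}

protected lemma measurable (t : ℝ) : Measurable (radialJoint t) := by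
  unfold radialJoint radialWeight radialKernel
  fun_prop

protected lemma integrable (ht : 0 < t) :
    Integrable (radialJoint t) ((volume.restrict (Ioi 0)).prod (volume.restrict (Ioi 0))) := by
  have hmeas := radialJoint.measurable t
  have hpos : ∀ᵐ σ ∂volume.restrict (Ioi (0 : ℝ)), 0 < σ := ae_restrict_mem measurableSet_Ioi
  refine (integrable_prod_iff hmeas.aestronglyMeasurable).2 ⟨?_, ?_⟩
  · filter_upwards [hpos] with σ hσ
    exact (radialKernel.integrableOn_Ioi hσ.le).const_mul (radialWeight t σ)
  refine ((radialWeight.integrable_mul_exp_half ht).const_mul √2).integrableOn.mono'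
    hmeas.norm.stronglyMeasurable.integral_prod_right'.aestronglyMeasurable ?_
  filter_upwards [hpos] with σ hσ
  have hw := radialWeight.nonneg ht.le hσ.le
  have hnorm : ∫ r in Ioi 0, ‖radialJoint t (σ, r)‖ =
      radialWeight t σ * ∫ r in Ioi 0, radialKernel σ r := by
    rw [← integral_const_mul]
    refine setIntegral_congr_fun measurableSet_Ioi fun r hr => norm_of_nonneg ?_
    exact mul_nonneg hw (radialKernel.nonneg σ (le_of_lt hr))
  rw [norm_of_nonneg (integral_nonneg fun _ => norm_nonneg _), hnorm, mul_left_comm]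
  exact mul_le_mul_of_nonneg_left (radialKernel.integral_Ioi_zero_le hσ.le) hw

lemma integrable_add (ht : 0 < t) (hs : 0 ≤ s) :
    Integrable (fun p => radialJoint t (p + (s, s)))
      ((volume.restrict (Ioi 0)).prod (volume.restrict (Ioi 0))) := by
  have hquadrant := radialJoint.integrable ht
  rw [Measure.prod_restrict, ← IntegrableOn] at hquadrant ⊢
  have hpre : (· + (s, s)) ⁻¹' (Ioi s ×ˢ Ioi s) = Ioi (0 : ℝ) ×ˢ Ioi (0 : ℝ) := by
    ext p
    simp
  rw [← hpre]
  exact (integrableOn_preimage_comp_add_right_iff (s, s)).2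
    (hquadrant.mono_set (prod_mono (Ioi_subset_Ioi hs) (Ioi_subset_Ioi hs)))

end radialJoint

lemma tendsto_exp_neg_div_mul_rpow :
    Tendsto (fun t : ℝ => exp (-t / 8) * t ^ (-(1 / 2) : ℝ)) atTop (𝓝 0) := by
  have hexp : Tendsto (fun t : ℝ => exp (-t / 8)) atTop (𝓝 0) :=
    tendsto_exp_atBot.comp (tendsto_neg_atTop_atBot.atBot_div_const (by norm_num))
  simpa using hexp.mul (tendsto_rpow_neg_atTop one_half_pos)

section RadialDensity

variable {s t : ℝ}

lemma pdens_eq_mul_integral_radialJoint (c t : ℝ) {a r : ℝ} (ha : 0 ≤ a) (har : a ≤ r) :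
    pdens c t r = c * ∫ σ in Ioi a, radialJoint t (σ, r) := by
  have hvanish : ∀ σ ∈ Ioi a \ Ioi r, radialJoint t (σ, r) = 0 := fun σ hσ => by
    rw [radialJoint, radialKernel.eq_zero_of_le (ha.trans (le_of_lt hσ.1)) (not_lt.1 hσ.2),
      mul_zero]
  rw [setIntegral_eq_of_subset_of_forall_sdiff_eq_zero measurableSet_Ioi (Ioi_subset_Ioi har)
    hvanish, pdens, ← integral_const_mul, ← integral_const_mul]
  refine setIntegral_congr_fun measurableSet_Ioi fun σ hσ => ?_
  have hD := radialKernel.cosh_sub_cosh_pos (ha.trans har) hσ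
  simp only [radialJoint, radialWeight, radialKernel]
  rw [neg_div 2 1, rpow_neg hD.le, ← sqrt_eq_rpow]
  ring

lemma pdens_add_eq_mul_integral_radialJoint (c t : ℝ) (hs : 0 ≤ s) {r : ℝ} (hr : 0 ≤ r) :
    pdens c t (r + s) = c * ∫ σ in Ioi 0, radialJoint t ((σ, r) + (s, s)) := by
  rw [pdens_eq_mul_integral_radialJoint c t hs (le_add_of_nonneg_left hr)]
  congr 1
  simpa using (setIntegral_Ioi_comp_add_right (fun σ => radialJoint t (σ, r + s)) 0 s).symm

lemma integrableOn_pdens_add (c : ℝ) (ht : 0 < t) (hs : 0 ≤ s) :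
    IntegrableOn (fun r => pdens c t (r + s)) (Ioi 0) :=
  IntegrableOn.congr_fun ((radialJoint.integrable_add ht hs).integral_prod_right.const_mul c)
    (fun _ hr => (pdens_add_eq_mul_integral_radialJoint c t hs (le_of_lt hr)).symm)
    measurableSet_Ioi

lemma integral_abs_radialJoint_sub_add_le (ht : 0 < t) (hs : 0 ≤ s) {σ : ℝ} (hσ : 0 ≤ σ) :
    ∫ r in Ioi 0, |radialJoint t (σ, r) - radialJoint t ((σ, r) + (s, s))| ≤
      √2 * |radialWeight t σ * exp (σ / 2) - radialWeight t (σ + s) * exp ((σ + s) / 2)| +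
        √2 * exp (s / 2) * radialWeight t (σ + s) := by
  have h := radialKernel.integral_abs_mul_sub_mul_add_le hs hσ (radialWeight t σ)
    (radialWeight t (σ + s))
  rwa [abs_of_nonneg (radialWeight.nonneg ht.le (add_nonneg hσ hs))] at h

lemma integral_abs_pdens_sub_add_le_integral_radialJoint (c : ℝ) (ht : 0 < t) (hs : 0 ≤ s) :
    ∫ r in Ioi 0, |pdens c t r - pdens c t (r + s)| ≤
      |c| * ∫ σ in Ioi 0, ∫ r in Ioi 0,
        |radialJoint t (σ, r) - radialJoint t ((σ, r) + (s, s))| := by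
  have h₀ := radialJoint.integrable ht
  have hₛ := radialJoint.integrable_add ht hs
  have heq : ∫ r in Ioi 0, |pdens c t r - pdens c t (r + s)| = |c| * ∫ r in Ioi 0,
      |∫ σ in Ioi 0, (radialJoint t (σ, r) - radialJoint t ((σ, r) + (s, s)))| := by
    rw [← integral_const_mul]
    refine integral_congr_ae ?_
    filter_upwards [ae_restrict_mem measurableSet_Ioi, h₀.prod_left_ae, hₛ.prod_left_ae]
      with r hr i₀ iₛ
    rw [pdens_eq_mul_integral_radialJoint c t le_rfl (le_of_lt hr),
      pdens_add_eq_mul_integral_radialJoint c t hs (le_of_lt hr), ← mul_sub, abs_mul,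
      ← integral_sub i₀ iₛ]
  rw [heq]
  exact mul_le_mul_of_nonneg_left (integral_norm_integral_le (h₀.sub hₛ)) (abs_nonneg c)

lemma integral_abs_pdens_sub_add_le (c : ℝ) (ht : 0 < t) (hs : 0 ≤ s) :
    ∫ r in Ioi 0, |pdens c t r - pdens c t (r + s)| ≤
      |c| * (√2 * (∫ σ, |radialWeight t σ * exp (σ / 2) -
          radialWeight t (σ + s) * exp ((σ + s) / 2)|) +
        √2 * exp (s / 2) * (exp (-t / 8) * t ^ (-(1 / 2) : ℝ))) := by
  have hdiff := (radialJoint.integrable ht).sub (radialJoint.integrable_add ht hs)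
  have hg := radialWeight.integrable_mul_exp_half ht
  have hgdiff : Integrable fun σ => |radialWeight t σ * exp (σ / 2) -
      radialWeight t (σ + s) * exp ((σ + s) / 2)| := integrable_norm_sub_comp_add_right hg s
  have hgmul := (hgdiff.const_mul √2).integrableOn (s := Ioi 0)
  have hwmul := (((radialWeight.integrable ht).comp_add_right s).const_mul
    (√2 * exp (s / 2))).integrableOn (s := Ioi 0)
  refine (integral_abs_pdens_sub_add_le_integral_radialJoint c ht hs).trans
    (mul_le_mul_of_nonneg_left ?_ (abs_nonneg c))
  calc ∫ σ in Ioi 0, ∫ r in Ioi 0, |radialJoint t (σ, r) - radialJoint t ((σ, r) + (s, s))|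
      ≤ ∫ σ in Ioi 0, (√2 * |radialWeight t σ * exp (σ / 2) -
            radialWeight t (σ + s) * exp ((σ + s) / 2)| +
          √2 * exp (s / 2) * radialWeight t (σ + s)) :=
        setIntegral_mono_on hdiff.abs.integral_prod_left (hgmul.add hwmul) measurableSet_Ioi
          fun σ hσ => integral_abs_radialJoint_sub_add_le ht hs (le_of_lt hσ)
    _ = √2 * (∫ σ in Ioi 0, |radialWeight t σ * exp (σ / 2) -
            radialWeight t (σ + s) * exp ((σ + s) / 2)|) +
          √2 * exp (s / 2) * ∫ σ in Ioi 0, radialWeight t (σ + s) := by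
        rw [integral_add hgmul hwmul, integral_const_mul, integral_const_mul]
    _ ≤ _ := by
        gcongr ?_ + _ * ?_
        · exact mul_le_mul_of_nonneg_left
            (setIntegral_le_integral hgdiff (.of_forall fun _ => abs_nonneg _)) (sqrt_nonneg 2)
        · exact radialWeight.integral_Ioi_add_le ht hs

theorem tendsto_integral_abs_pdens_sub_add (c : ℝ) (hs : 0 ≤ s) :
    Tendsto (fun t => ∫ r in Ioi 0, |pdens c t r - pdens c t (r + s)|) atTop (𝓝 0) := by
  have hbound := (((radialWeight.tendsto_integral_abs_mul_exp_half_sub s).const_mul √2).add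
    (tendsto_exp_neg_div_mul_rpow.const_mul (√2 * exp (s / 2)))).const_mul |c|
  simp only [mul_zero, add_zero] at hbound
  refine squeeze_zero' (.of_forall fun t => integral_nonneg fun _ => abs_nonneg _) ?_ hbound
  filter_upwards [eventually_gt_atTop 0] with t ht
  exact integral_abs_pdens_sub_add_le c ht hs

end RadialDensity

lemma abs_integral_mul_sub_integral_mul_le {X : Type*} [MeasurableSpace X] {μ : Measure X}
    {f g u : X → ℝ} {M : ℝ} (hf : Integrable f μ) (hg : Integrable g μ)
    (hu : AEStronglyMeasurable u μ) (hM : ∀ᵐ x ∂μ, |u x| ≤ M) :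
    |∫ x, f x * u x ∂μ - ∫ x, g x * u x ∂μ| ≤ M * ∫ x, |f x - g x| ∂μ := by
  rw [← norm_eq_abs, ← integral_sub (hf.mul_bdd hu hM) (hg.mul_bdd hu hM), ← integral_const_mul]
  refine norm_integral_le_of_norm_le ((hf.sub hg).abs.const_mul M) ?_
  filter_upwards [hM] with x hx
  rw [← sub_mul, norm_mul, mul_comm]
  exact mul_le_mul_of_nonneg_right hx (norm_nonneg _)

theorem integrals_against_translated_kernel_general {u : ℝ → ℝ}
    (hu_meas : AEStronglyMeasurable u (volume.restrict (Ioi 0)))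
    (hu_bdd : ∃ M : ℝ, ∀ᵐ r ∂volume.restrict (Ioi 0), |u r| ≤ M)
    {s : ℝ} (hs : 0 ≤ s) (c : ℝ) :
    Tendsto
      (fun t : ℝ =>
        (∫ r in Ioi (0 : ℝ), pdens c t r * u r) - ∫ r in Ioi (0 : ℝ), pdens c t (r + s) * u r)
      atTop (𝓝 0) := by
  obtain ⟨M, hM⟩ := hu_bdd
  have hbound := (tendsto_integral_abs_pdens_sub_add c hs).const_mul M
  rw [mul_zero] at hbound
  refine squeeze_zero_norm' ?_ hbound
  filter_upwards [eventually_gt_atTop 0] with t ht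
  have hint : IntegrableOn (pdens c t) (Ioi 0) := by
    simpa using integrableOn_pdens_add c ht le_rfl
  exact abs_integral_mul_sub_integral_mul_le hint (integrableOn_pdens_add c ht hs) hu_meas hM

theorem integrals_against_translated_kernel (u : ℝ → ℝ)
    (hu_cont : ContinuousOn u (Set.Ici (0 : ℝ)))
    (hu_bdd : ∃ M : ℝ, ∀ r ∈ Set.Ici (0 : ℝ), |u r| ≤ M)
    (s c : ℝ) (hs : s ∈ Set.Icc (0 : ℝ) 1) (hc : 0 < c) :
    Tendsto
      (fun t : ℝ =>
        (∫ r in Set.Ioi (0 : ℝ), pdens c t r * u r) -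
          ∫ r in Set.Ioi (0 : ℝ), pdens c t (r + s) * u r)
      atTop (nhds 0) :=
  integrals_against_translated_kernel_general
    ((hu_cont.mono Ioi_subset_Ici_self).aestronglyMeasurable measurableSet_Ioi)
    (hu_bdd.imp fun _ hM => ae_restrict_of_forall_mem measurableSet_Ioi
      fun r hr => hM r (Ioi_subset_Ici_self hr)) hs.1 c
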